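/- Let N ≥ 1 and n ≥ 2 be integers and ω = exp(2πi/N). Let r_1, ..., r_{n−2} ∈ ℂ and let b_1, ..., b_{n−1} ∈ ℂ be pairwise distinct with r_l^N ≠ b_k^N for all l, k. For a phase vector (ρ_1, ..., ρ_{n−2}) ∈ (ℤ/N)^{n−2} write a_l = r_l ω^{−ρ_l}. Then ∑_{(ρ_1,...,ρ_{n−2}) ∈ (ℤ/N)^{n−2}} ∏_{l=1}^{n−2} [ a_l · ∏_{j=l+1}^{n−2} (a_l − a_j) / ∏_{k=1}^{n−1} (a_l − b_k) ] = N^{n−2} (∏_{l=1}^{n−2} r_l^N) · ∏_{1≤k<k'≤n−1} (b_k^N − b_{k'}^N)/(b_k − b_{k'}) · ∏_{1≤l<l'≤n−2} (r_l^N − r_{l'}^N) / ∏_{k=1}^{n−1} ∏_{l=1}^{n−2} (b_k^N − r_l^N). -/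

import Mathlib

open Finset

/-!
Up to the Vandermonde product of `b`, the summand at `a` is the determinant of the matrix with
entries `a l / (a l - b (k + 1)) - a l / (a l - b 0)`, a Cauchy matrix with rescaled rows and
columns. The row of index `l` depends on the phases only through `ρ l`, so by multilinearity the sum
over all phases can be taken inside each row. Since `∏ s, (X - r ζ ^ s) = X ^ N - r ^ N`, a
logarithmic derivative shows that the sum of `a / (a - x)` over `a = r ζ ^ s` is
`N r ^ N / (r ^ N - x ^ N)`. With `m` rows, the outcome is `N ^ m` times the
same determinant at the `N`-th powers.
-/

theorem prod_prod_sub_comm_of_even {R ι κ : Type*} [CommRing R] [Fintype ι] [Fintype κ]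
    (h : Even (Fintype.card ι * Fintype.card κ)) (x : ι → R) (y : κ → R) :
    ∏ i, ∏ j, (x i - y j) = ∏ j, ∏ i, (y j - x i) := by
  rw [prod_comm]
  simp only [← neg_sub (y _), prod_neg, prod_mul_distrib, prod_const, card_univ, ← pow_mul,
    h.neg_one_pow, one_mul]

section Determinants

theorem det_of_mul_mul {R ι : Type*} [CommRing R] [Fintype ι] [DecidableEq ι]
    (u v : ι → R) (A : Matrix ι ι R) :
    (Matrix.of fun i j => u i * v j * A i j).det = (∏ i, u i) * (∏ j, v j) * A.det := by
  simpa only [Matrix.of_apply, mul_assoc, Matrix.det_mul_row] using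
    Matrix.det_mul_column u (Matrix.of fun i j => v j * A i j)

theorem sum_det_of_rows {R ι : Type*} {κ : ι → Type*} [CommRing R] [Fintype ι] [DecidableEq ι]
    [∀ i, Fintype (κ i)] (F : ∀ i, κ i → ι → R) :
    ∑ ρ : ∀ i, κ i, (Matrix.of fun i => F i (ρ i)).det = (Matrix.of fun i => ∑ s, F i s).det :=
  (Matrix.detRowAlternating.toMultilinearMap.map_sum F).symm

theorem det_succ_eq_mul_det_schurComplement {K : Type*} [Field K] {m : ℕ}
    (A : Matrix (Fin (m + 1)) (Fin (m + 1)) K) (hA : A 0 0 ≠ 0) :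
    A.det = A 0 0 *
      (Matrix.of fun i j : Fin m => A i.succ j.succ - A i.succ 0 / A 0 0 * A 0 j.succ).det := by
  set c : Fin (m + 1) → K := Fin.cons 0 fun i => A i.succ 0 / A 0 0 with hc
  have eliminate : A.det = (Matrix.of fun i j => A i j - c i * A 0 j).det :=
    Matrix.det_eq_of_forall_row_eq_smul_add_const c 0 rfl fun i j => by simp [hc]
  have column_zero (i : Fin m) : A i.succ 0 - c i.succ * A 0 0 = 0 := by simp [hc, hA]
  rw [eliminate, Matrix.det_succ_column_zero, Fin.sum_univ_succ]
  simp only [Matrix.of_apply, column_zero]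
  simp [hc, Matrix.submatrix]

end Determinants

section Cauchy

variable {K : Type*} [Field K] {m : ℕ}

/-- The Cauchy matrix of two families, with the sign convention `(a i - b j)⁻¹`. -/
def cauchyMatrix {ι κ : Type*} (a : ι → K) (b : κ → K) : Matrix ι κ K :=
  Matrix.of fun i j => (a i - b j)⁻¹

theorem det_cauchyMatrix (a b : Fin m → K) (hab : ∀ i j, a i - b j ≠ 0) :
    (cauchyMatrix a b).det =
      (∏ i, ∏ j ∈ Ioi i, (a i - a j)) * (∏ i, ∏ j ∈ Ioi i, (b j - b i)) /
        ∏ i, ∏ j, (a i - b j) := by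
  induction m with
  | zero => simp
  | succ m ih =>
    have schur_complement (i j : Fin m) :
        cauchyMatrix a b i.succ j.succ -
            cauchyMatrix a b i.succ 0 / cauchyMatrix a b 0 0 * cauchyMatrix a b 0 j.succ =
          (a 0 - a i.succ) / (a i.succ - b 0) * ((b j.succ - b 0) / (a 0 - b j.succ)) *
            cauchyMatrix (a ∘ Fin.succ) (b ∘ Fin.succ) i j := by
      have := hab 0 0
      have := hab i.succ 0
      have := hab 0 j.succ
      have := hab i.succ j.succ
      simp only [cauchyMatrix, Matrix.of_apply, Function.comp_apply]
      field_simp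
      ring
    rw [det_succ_eq_mul_det_schurComplement _ (inv_ne_zero (hab 0 0))]
    simp only [schur_complement]
    rw [det_of_mul_mul, ih (a ∘ Fin.succ) (b ∘ Fin.succ) fun i j => hab i.succ j.succ]
    simp only [cauchyMatrix, Matrix.of_apply, Function.comp_apply, Fin.prod_univ_succ,
      Fin.prod_Ioi_succ, Fin.prod_Ioi_zero, prod_div_distrib, prod_mul_distrib]
    simp only [div_eq_mul_inv, mul_inv]
    ring

/-- The matrix of differences with the zeroth column in the `m × (m + 1)` matrix
`a i / (a i - b j)`. It has the same determinant as the latter with a row of ones put on top. -/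
def cauchyDifference (a : Fin m → K) (b : Fin (m + 1) → K) : Matrix (Fin m) (Fin m) K :=
  Matrix.of fun i j => a i / (a i - b j.succ) - a i / (a i - b 0)

theorem det_cauchyDifference (a : Fin m → K) (b : Fin (m + 1) → K) (hab : ∀ i j, a i - b j ≠ 0) :
    (cauchyDifference a b).det =
      (∏ i, a i) * (∏ i, ∏ j ∈ Ioi i, (a i - a j)) * (∏ i, ∏ j ∈ Ioi i, (b j - b i)) /
        ∏ i, ∏ j, (a i - b j) := by
  have rescale : cauchyDifference a b = Matrix.of fun i j =>
      a i / (a i - b 0) * (b j.succ - b 0) * cauchyMatrix a (b ∘ Fin.succ) i j := by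
    ext i j
    have := hab i 0
    have := hab i j.succ
    simp only [cauchyDifference, cauchyMatrix, Matrix.of_apply, Function.comp_apply]
    field_simp
    ring
  rw [rescale, det_of_mul_mul, det_cauchyMatrix a (b ∘ Fin.succ) fun i j => hab i j.succ]
  simp only [Function.comp_apply, Fin.prod_univ_succ, Fin.prod_Ioi_succ, Fin.prod_Ioi_zero,
    prod_div_distrib, prod_mul_distrib]
  ring

theorem prod_eq_det_cauchyDifference_div (a : Fin m → K) {b : Fin (m + 1) → K}
    (hb : Function.Injective b) (hab : ∀ i j, a i - b j ≠ 0) :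
    ∏ i, (a i * (∏ j ∈ Ioi i, (a i - a j)) / ∏ j, (a i - b j)) =
      (cauchyDifference a b).det / ∏ i, ∏ j ∈ Ioi i, (b j - b i) := by
  have vandermonde_ne_zero : ∏ i, ∏ j ∈ Ioi i, (b j - b i) ≠ 0 :=
    prod_ne_zero_iff.2 fun i _ => prod_ne_zero_iff.2 fun j hj =>
      sub_ne_zero.2 (hb.ne (mem_Ioi.1 hj).ne')
  rw [det_cauchyDifference a b hab, div_right_comm, mul_div_cancel_right₀ _ vandermonde_ne_zero,
    prod_div_distrib, prod_mul_distrib]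

end Cauchy

section Phases

theorem mul_pow_pow_of_pow_eq_one {M : Type*} [CommMonoid M] {N : ℕ} {ζ : M} (hζ : ζ ^ N = 1)
    (r : M) (s : ℕ) : (r * ζ ^ s) ^ N = r ^ N := by
  rw [mul_pow, pow_right_comm, hζ, one_pow, mul_one]

theorem mul_pow_sub_ne_zero_of_pow_eq_one {R : Type*} [CommRing R] {N : ℕ} {ζ : R}
    (hζ : ζ ^ N = 1) {r x : R} (hrx : r ^ N ≠ x ^ N) (s : ℕ) : r * ζ ^ s - x ≠ 0 := fun h =>
  hrx (by rw [← sub_eq_zero.1 h, mul_pow_pow_of_pow_eq_one hζ])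

variable {K : Type*} [Field K] {N : ℕ} {ζ : K}

theorem sum_inv_sub_mul_pow_of_isPrimitiveRoot (hζ : IsPrimitiveRoot ζ N) {r x : K}
    (hrx : r ^ N ≠ x ^ N) :
    ∑ s ∈ range N, (x - r * ζ ^ s)⁻¹ = N * x ^ (N - 1) / (x ^ N - r ^ N) := by
  have logDeriv := (X_pow_sub_C_splits_of_isPrimitiveRoot hζ
    rfl).eval_derivative_div_eval_of_ne_zero (x := x) (by simpa [sub_eq_zero] using hrx.symm)
  rw [← Polynomial.nthRoots, hζ.nthRoots_eq rfl] at logDeriv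
  simpa [sum_eq_multiset_sum, Polynomial.derivative_X_pow, -map_pow, mul_comm r] using
    logDeriv.symm

theorem sum_div_sub_of_isPrimitiveRoot (hζ : IsPrimitiveRoot ζ N) {r x : K}
    (hrx : r ^ N ≠ x ^ N) :
    ∑ s : Fin N, r * ζ ^ (s : ℕ) / (r * ζ ^ (s : ℕ) - x) = N * (r ^ N / (r ^ N - x ^ N)) := by
  have hN : N ≠ 0 := by
    rintro rfl
    simp at hrx
  have hden : r ^ N - x ^ N ≠ 0 := sub_ne_zero.2 hrx
  have split (s : ℕ) : r * ζ ^ s / (r * ζ ^ s - x) = 1 - x * (x - r * ζ ^ s)⁻¹ := by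
    have hs := mul_pow_sub_ne_zero_of_pow_eq_one hζ.pow_eq_one hrx s
    rw [← neg_sub (r * ζ ^ s) x]
    field_simp
    ring
  rw [Fin.sum_univ_eq_sum_range fun s => r * ζ ^ s / (r * ζ ^ s - x)]
  simp only [split, sum_sub_distrib, ← mul_sum, sum_inv_sub_mul_pow_of_isPrimitiveRoot hζ hrx,
    sum_const, card_range, nsmul_one]
  calc N - x * (N * x ^ (N - 1) / (x ^ N - r ^ N))
      = N + N * x ^ N / (r ^ N - x ^ N) := by
        rw [← neg_sub (r ^ N), div_neg, ← mul_pow_sub_one hN x]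
        ring
    _ = N * (r ^ N / (r ^ N - x ^ N)) := by
        field_simp
        ring

theorem sum_det_cauchyDifference (hζ : IsPrimitiveRoot ζ N) {m : ℕ} (r : Fin m → K)
    (b : Fin (m + 1) → K) (hrb : ∀ l k, r l ^ N ≠ b k ^ N) :
    ∑ ρ : Fin m → Fin N, (cauchyDifference (fun l => r l * ζ ^ (ρ l : ℕ)) b).det =
      N ^ m * (cauchyDifference (fun l => r l ^ N) (fun k => b k ^ N)).det := by
  have sum_row (l k : Fin m) :
      ∑ s : Fin N, cauchyDifference (fun i => r i * ζ ^ (s : ℕ)) b l k =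
        N * cauchyDifference (fun i => r i ^ N) (fun j => b j ^ N) l k := by
    simp only [cauchyDifference, Matrix.of_apply, sum_sub_distrib,
      sum_div_sub_of_isPrimitiveRoot hζ (hrb l _), mul_sub]
  -- In row `l`, the phases of the other rows are irrelevant and may be taken equal to that of `l`.
  calc ∑ ρ : Fin m → Fin N, (cauchyDifference (fun l => r l * ζ ^ (ρ l : ℕ)) b).det
      = (Matrix.of fun l => ∑ s : Fin N, cauchyDifference (fun i => r i * ζ ^ (s : ℕ)) b l).det :=
        sum_det_of_rows fun l (s : Fin N) => cauchyDifference (fun i => r i * ζ ^ (s : ℕ)) b l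
    _ = ((N : K) • cauchyDifference (fun l => r l ^ N) (fun k => b k ^ N)).det := by
        congr 1
        ext l k
        simp only [Matrix.of_apply, Finset.sum_apply, sum_row, Matrix.smul_apply, smul_eq_mul]
    _ = N ^ m * (cauchyDifference (fun l => r l ^ N) (fun k => b k ^ N)).det := by
        rw [Matrix.det_smul, Fintype.card_fin]

end Phases

theorem main_summation_formula_general {K : Type*} [Field K] {N m : ℕ} {ζ : K}
    (hζ : IsPrimitiveRoot ζ N) (r : Fin m → K) (b : Fin (m + 1) → K)
    (hb : Function.Injective b) (hrb : ∀ l k, r l ^ N ≠ b k ^ N) :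
    ∑ ρ : Fin m → Fin N, ∏ l, (r l * ζ ^ (ρ l : ℕ) *
        (∏ j ∈ Ioi l, (r l * ζ ^ (ρ l : ℕ) - r j * ζ ^ (ρ j : ℕ))) /
          ∏ k, (r l * ζ ^ (ρ l : ℕ) - b k)) =
      (N : K) ^ m * (∏ l, r l ^ N) *
        (∏ k, ∏ k' ∈ Ioi k, (b k ^ N - b k' ^ N) / (b k - b k')) *
        (∏ l, ∏ l' ∈ Ioi l, (r l ^ N - r l' ^ N)) / ∏ k, ∏ l, (b k ^ N - r l ^ N) := by
  have summand_eq_det (ρ : Fin m → Fin N) :=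
    prod_eq_det_cauchyDifference_div (fun l => r l * ζ ^ (ρ l : ℕ)) hb fun l k =>
      mul_pow_sub_ne_zero_of_pow_eq_one hζ.pow_eq_one (hrb l k) (ρ l)
  have vandermonde_quotient : ∏ k, ∏ k' ∈ Ioi k, (b k ^ N - b k' ^ N) / (b k - b k') =
      (∏ k, ∏ k' ∈ Ioi k, (b k' ^ N - b k ^ N)) / ∏ k, ∏ k' ∈ Ioi k, (b k' - b k) := by
    simp only [← prod_div_distrib]
    refine prod_congr rfl fun k _ => prod_congr rfl fun k' _ => ?_
    rw [← neg_sub (b k' ^ N), ← neg_sub (b k'), neg_div_neg_eq]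
  have denominator_comm :
      ∏ l, ∏ k, (r l ^ N - b k ^ N) = ∏ k, ∏ l, (b k ^ N - r l ^ N) :=
    prod_prod_sub_comm_of_even (by simpa using Nat.even_mul_succ_self m) _ _
  simp only [summand_eq_det]
  rw [← sum_div, sum_det_cauchyDifference hζ r b hrb,
    det_cauchyDifference _ _ fun l k => sub_ne_zero.2 (hrb l k), vandermonde_quotient,
    denominator_comm]
  ring

theorem main_summation_formula (N n : ℕ) (hN : 1 ≤ N) (hn : 2 ≤ n) (ω : ℂ)
    (hω : ω = Complex.exp (2 * (Real.pi : ℂ) * Complex.I / (N : ℂ)))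
    (r : Fin (n - 2) → ℂ) (b : Fin (n - 1) → ℂ) (hb : Function.Injective b)
    (hrb : ∀ l k, (r l) ^ N ≠ (b k) ^ N) :
    ∑ ρ : Fin (n - 2) → Fin N,
        ∏ l : Fin (n - 2),
          (r l * ω ^ (-((ρ l : ℕ) : ℤ)) *
            (∏ j ∈ Finset.univ.filter (fun j => l < j),
              (r l * ω ^ (-((ρ l : ℕ) : ℤ)) - r j * ω ^ (-((ρ j : ℕ) : ℤ)))) /
            ∏ k : Fin (n - 1), (r l * ω ^ (-((ρ l : ℕ) : ℤ)) - b k)) =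
      (N : ℂ) ^ (n - 2) * (∏ l : Fin (n - 2), (r l) ^ N) *
        (∏ k : Fin (n - 1), ∏ k' ∈ Finset.univ.filter (fun k' => k < k'),
          ((b k) ^ N - (b k') ^ N) / (b k - b k')) *
        (∏ l : Fin (n - 2), ∏ l' ∈ Finset.univ.filter (fun l' => l < l'),
          ((r l) ^ N - (r l') ^ N)) /
        ∏ k : Fin (n - 1), ∏ l : Fin (n - 2), ((b k) ^ N - (r l) ^ N) := by
  obtain ⟨m, rfl⟩ := Nat.exists_eq_add_of_le' hn
  simp only [hω, zpow_neg, zpow_natCast, ← inv_pow, filter_lt_eq_Ioi]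
  exact main_summation_formula_general (Complex.isPrimitiveRoot_exp N (by lia)).inv r b hb hrb
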